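/- Narcissistic-avaricious welfare guarantee: in any liquid democracy game, let p ∈ [0,1], and for each agent i let i* ∈ argmax_{j∈V} u_{ij}. Let z be the mixed profile in which each agent i votes herself with probability p and delegates to i* with probability 1−p. Then SW(z) ≥ p(1−p) · OPT. -/

import Mathlib

/-!
The bound holds agent by agent. Under `z = nazProfile p istar`, the event "`i` delegates to `istar i` and
`istar i` votes" has probability at least `p * (1 - p)` by independence, and on it agent `i` receives
her maximal utility `u i (istar i)`, so `util u z i ≥ p * (1 - p) * u i (istar i)`
(`le_util_nazProfile`). Conversely no mixed profile gives agent `i` more than `u i (istar i)`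
(`util_le`). Summing both bounds over the agents gives the theorem.
-/

open Finset

/-- The guru of agent `i` under pure profile `s` (where `s i = some j` means `i`
delegates to `j`, with `s i = some i` meaning `i` votes herself, and `s i = none`
meaning `i` abstains): follow delegation arcs for `n` steps; the endpoint is the
guru provided it votes itself. -/
def guru {n : ℕ} (s : Fin n → Option (Fin n)) (i : Fin n) : Option (Fin n) :=
  ((fun o => Option.bind o s)^[n] (some i)).bind
    (fun j => if s j = some j then some j else none)

/-- Utility of agent `i` in the pure profile `s`: `u i (g i)` if the guru exists, else `0`. -/
def pureUtil {n : ℕ} (u : Fin n → Fin n → ℝ) (s : Fin n → Option (Fin n)) (i : Fin n) : ℝ :=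
  (guru s i).elim 0 (u i)

/-- A mixed strategy for a single agent: nonnegative, total probability at most one
(the residual probability is abstention). -/
def IsStrat {n : ℕ} (y : Fin n → ℝ) : Prop := (∀ j, 0 ≤ y j) ∧ (∑ j, y j) ≤ 1

/-- A mixed strategy profile. -/
def IsMixed {n : ℕ} (x : Fin n → Fin n → ℝ) : Prop := ∀ i, IsStrat (x i)

/-- Probability that the independent randomization `x` produces the pure profile `s`. -/
def prob {n : ℕ} (x : Fin n → Fin n → ℝ) (s : Fin n → Option (Fin n)) : ℝ :=
  ∏ i, (s i).elim (1 - ∑ j, x i j) (x i)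

/-- Expected utility of agent `i` under the mixed profile `x`. -/
def util {n : ℕ} (u x : Fin n → Fin n → ℝ) (i : Fin n) : ℝ :=
  ∑ s : Fin n → Option (Fin n), prob x s * pureUtil u s i

/-- Expected social welfare of the mixed profile `x`. -/
def SW {n : ℕ} (u x : Fin n → Fin n → ℝ) : ℝ := ∑ i, util u x i

/-- The set of social-welfare values achievable by mixed profiles; `OPT` is its greatest element. -/
def SWvals {n : ℕ} (u : Fin n → Fin n → ℝ) : Set ℝ :=
  {w | ∃ x, IsMixed x ∧ w = SW u x}

/-- `x` is an `ε`-Nash equilibrium. -/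
def EpsNash {n : ℕ} (u : Fin n → Fin n → ℝ) (ε : ℝ) (x : Fin n → Fin n → ℝ) : Prop :=
  ∀ i y, IsStrat y → util u x i ≥ (1 - ε) * util u (Function.update x i y) i

/-- `x` is an (exact, mixed) Nash equilibrium. -/
def NashEq {n : ℕ} (u x : Fin n → Fin n → ℝ) : Prop :=
  ∀ i y, IsStrat y → util u x i ≥ util u (Function.update x i y) i

/-- The narcissistic-avaricious profile: each agent i votes herself with
probability p and delegates to istar i with probability 1 - p. -/
def nazProfile {n : ℕ} (p : ℝ) (istar : Fin n → Fin n) : Fin n → Fin n → ℝ :=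
  fun i j => (if j = i then p else 0) + (if j = istar i then 1 - p else 0)

lemma prob_nonneg {n : ℕ} {x : Fin n → Fin n → ℝ} (hx : IsMixed x)
    (s : Fin n → Option (Fin n)) : 0 ≤ prob x s := by
  refine Finset.prod_nonneg fun i _ => ?_
  cases s i with
  | none => exact sub_nonneg.2 (hx i).2
  | some j => exact (hx i).1 j

lemma sum_choice_eq_one {n : ℕ} (x : Fin n → Fin n → ℝ) (k : Fin n) :
    ∑ o : Option (Fin n), o.elim (1 - ∑ j, x k j) (x k) = 1 := by
  simp [Fintype.sum_option]

/-- By independence, the probability of a product event is the product of the probabilities. -/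
lemma sum_prob_piFinset {n : ℕ} (x : Fin n → Fin n → ℝ) (t : Fin n → Finset (Option (Fin n))) :
    ∑ s ∈ Fintype.piFinset t, prob x s
      = ∏ k, ∑ o ∈ t k, o.elim (1 - ∑ j, x k j) (x k) := by
  rw [Finset.prod_univ_sum]
  rfl

lemma sum_prob {n : ℕ} (x : Fin n → Fin n → ℝ) :
    ∑ s : Fin n → Option (Fin n), prob x s = 1 := by
  have h := sum_prob_piFinset x (fun _ => Finset.univ)
  rw [Fintype.piFinset_univ] at h
  rw [h]
  exact Finset.prod_eq_one fun k _ => sum_choice_eq_one x k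

lemma pureUtil_nonneg {n : ℕ} {u : Fin n → Fin n → ℝ} (hu : ∀ i j, 0 ≤ u i j)
    (s : Fin n → Option (Fin n)) (i : Fin n) : 0 ≤ pureUtil u s i := by
  unfold pureUtil
  cases guru s i with
  | none => exact le_rfl
  | some j => exact hu i j

lemma util_le {n : ℕ} {u x : Fin n → Fin n → ℝ} (hx : IsMixed x) {i : Fin n} {M : ℝ}
    (hM0 : 0 ≤ M) (hM : ∀ j, u i j ≤ M) : util u x i ≤ M := by
  have hs : ∀ s, pureUtil u s i ≤ M := by
    intro s
    unfold pureUtil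
    cases guru s i with
    | none => exact hM0
    | some j => exact hM j
  calc util u x i ≤ ∑ s : Fin n → Option (Fin n), prob x s * M :=
        Finset.sum_le_sum fun s _ => mul_le_mul_of_nonneg_left (hs s) (prob_nonneg hx s)
    _ = M := by rw [← Finset.sum_mul, sum_prob, one_mul]

lemma guru_eq_of_delegate {n : ℕ} {s : Fin n → Option (Fin n)} {i j : Fin n}
    (hi : s i = some j) (hj : s j = some j) : guru s i = some j := by
  -- At least one delegation step is followed, as `Fin n` is inhabited by `i`.
  obtain ⟨m, rfl⟩ : ∃ m, n = m + 1 := ⟨n - 1, by have := i.pos; omega⟩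
  unfold guru
  rw [Function.iterate_succ_apply]
  have h1 : Option.bind (some i) s = some j := hi
  have h2 : (fun o => Option.bind o s) (some j) = some j := hj
  rw [h1, Function.iterate_fixed h2]
  simp [hj]

lemma isMixed_nazProfile {n : ℕ} {p : ℝ} (hp : p ∈ Set.Icc (0:ℝ) 1) (istar : Fin n → Fin n) :
    IsMixed (nazProfile p istar) := by
  obtain ⟨hp0, hp1⟩ := hp
  refine fun i => ⟨fun j => ?_, ?_⟩
  · unfold nazProfile
    split_ifs <;> linarith
  · simp [nazProfile, Finset.sum_add_distrib]

/-- The event used is "`i` and `istar i` both choose `istar i`"; it is a product event also when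
`istar i = i`, in which case it has probability one. -/
lemma le_util_nazProfile {n : ℕ} {u : Fin n → Fin n → ℝ} (hu : ∀ i j, 0 ≤ u i j)
    {p : ℝ} (hp : p ∈ Set.Icc (0:ℝ) 1) (istar : Fin n → Fin n) (i : Fin n) :
    p * (1 - p) * u i (istar i) ≤ util u (nazProfile p istar) i := by
  have hz := isMixed_nazProfile hp istar
  obtain ⟨hp0, hp1⟩ := hp
  set z := nazProfile p istar with hzdef
  set t : Fin n → Finset (Option (Fin n)) := fun k =>
    if k = i ∨ k = istar i then {some (istar i)} else Finset.univ with ht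
  have hprob : p * (1 - p) ≤ ∑ s ∈ Fintype.piFinset t, prob z s := by
    rw [sum_prob_piFinset]
    have hc : p * (1 - p) = ∏ k : Fin n,
        ((if k = istar i then p else 1) * (if k = i then 1 - p else 1)) := by
      rw [Finset.prod_mul_distrib]
      simp
    rw [hc]
    refine Finset.prod_le_prod (fun k _ => ?_) (fun k _ => ?_)
    · have : 0 ≤ 1 - p := by linarith
      split_ifs <;> positivity
    · by_cases h1 : k = i ∨ k = istar i
      · simp only [ht, if_pos h1, Finset.sum_singleton, Option.elim_some, hzdef, nazProfile]
        by_cases hki : k = i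
        · subst hki
          by_cases hks : k = istar k
          · rw [← hks]
            simp only [if_true]
            nlinarith
          · simp [hks, Ne.symm hks]
        · obtain hk : k = istar i := h1.resolve_left hki
          simp only [hk, if_true]
          rw [if_neg (hk ▸ hki)]
          split_ifs <;> linarith
      · simp only [ht, if_neg h1, sum_choice_eq_one]
        rw [not_or] at h1
        simp [h1.1, h1.2]
  calc p * (1 - p) * u i (istar i)
      ≤ (∑ s ∈ Fintype.piFinset t, prob z s) * u i (istar i) :=
        mul_le_mul_of_nonneg_right hprob (hu _ _)
    _ = ∑ s ∈ Fintype.piFinset t, prob z s * pureUtil u s i := by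
        rw [Finset.sum_mul]
        refine Finset.sum_congr rfl fun s hs => ?_
        rw [Fintype.mem_piFinset] at hs
        have hi : s i = some (istar i) := by simpa [ht] using hs i
        have hj : s (istar i) = some (istar i) := by simpa [ht] using hs (istar i)
        simp [pureUtil, guru_eq_of_delegate hi hj]
    _ ≤ util u z i :=
        Finset.sum_le_sum_of_subset_of_nonneg (Finset.subset_univ _) fun s _ _ =>
          mul_nonneg (prob_nonneg hz s) (pureUtil_nonneg hu s i)

/-- Narcissistic-avaricious welfare guarantee: SW(z) ≥ p(1-p) · OPT. -/
theorem stmt16 {n : ℕ} (u : Fin n → Fin n → ℝ) (hu : ∀ i j, 0 ≤ u i j ∧ u i j ≤ 1)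
    (p : ℝ) (hp : p ∈ Set.Icc (0:ℝ) 1)
    (istar : Fin n → Fin n) (histar : ∀ i j, u i j ≤ u i (istar i))
    (OPT : ℝ) (hOPT : IsGreatest (SWvals u) OPT) :
    SW u (nazProfile p istar) ≥ p * (1-p) * OPT := by
  obtain ⟨⟨x, hx, rfl⟩, -⟩ := hOPT
  have hu0 : ∀ i j, 0 ≤ u i j := fun i j => (hu i j).1
  have hpp : 0 ≤ p * (1 - p) := mul_nonneg hp.1 (sub_nonneg.2 hp.2)
  unfold SW
  rw [ge_iff_le, Finset.mul_sum]
  refine Finset.sum_le_sum fun i _ => ?_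
  exact (mul_le_mul_of_nonneg_left (util_le hx (hu0 i _) (histar i)) hpp).trans
    (le_util_nazProfile hu0 hp istar i)
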